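/- Let h be a real-valued C^1 function on an open subset of ℝ² with h(u,v) > 0, and define the critical end chart β(u,v) = (u/h(u,v), v/h(u,v), 1/h(u,v)) ∈ ℝ³. Then the cross product of the partial derivatives satisfies β_u × β_v = (h_u, h_v, h − u·h_u − v·h_v)/h³, and hence EG − F² = |β_u × β_v|² = (h_u² + h_v² + (h − u·h_u − v·h_v)²)/h⁶; in particular β is an immersion at every point where (h_u, h_v, h − u·h_u − v·h_v) ≠ (0,0,0). -/

import Mathlib

noncomputable section

/-- Euclidean dot product on `ℝ³` (as `Fin 3 → ℝ`). -/
def dot3 (x y : Fin 3 → ℝ) : ℝ := x 0 * y 0 + x 1 * y 1 + x 2 * y 2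

/-- Standard cross product on `ℝ³`. -/
def cross3 (x y : Fin 3 → ℝ) : Fin 3 → ℝ :=
  ![x 1 * y 2 - x 2 * y 1, x 2 * y 0 - x 0 * y 2, x 0 * y 1 - x 1 * y 0]

/-- Partial derivative with respect to the first variable `u`. -/
def pdu (f : ℝ × ℝ → ℝ) (p : ℝ × ℝ) : ℝ := fderiv ℝ f p (1, 0)

/-- Partial derivative with respect to the second variable `v`. -/
def pdv (f : ℝ × ℝ → ℝ) (p : ℝ × ℝ) : ℝ := fderiv ℝ f p (0, 1)

/-- Partial derivative (vector valued) with respect to the first variable. -/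
def vdu (f : ℝ × ℝ → Fin 3 → ℝ) (p : ℝ × ℝ) : Fin 3 → ℝ := fderiv ℝ f p (1, 0)

/-- Partial derivative (vector valued) with respect to the second variable. -/
def vdv (f : ℝ × ℝ → Fin 3 → ℝ) (p : ℝ × ℝ) : Fin 3 → ℝ := fderiv ℝ f p (0, 1)

/-!
The chart is `β = h⁻¹ X` with `X (u, v) = (u, v, 1)`, so its derivative in a direction `w` is
`h⁻² (h X_w - h_w X)`. Expanding the cross product bilinearly, the terms containing `X × X` drop
out and `β_u × β_v = h⁻³ (h X_u × X_v - h_u X × X_v - h_v X_u × X)`, where `X_u`, `X_v` are the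
first two standard basis vectors. The rest is Lagrange's identity and the fact that two vectors of
`ℝ³` are linearly independent exactly when their cross product does not vanish.
-/

open Matrix Filter Topology

section CrossProduct

lemma cross3_eq_crossProduct (x y : Fin 3 → ℝ) : cross3 x y = x ⨯₃ y := rfl

lemma dot3_eq_dotProduct (x y : Fin 3 → ℝ) : dot3 x y = x ⬝ᵥ y := (vec3_dotProduct x y).symm

lemma dot3_mul_dot3_sub_sq (x y : Fin 3 → ℝ) :
    dot3 x x * dot3 y y - dot3 x y ^ 2 = dot3 (cross3 x y) (cross3 x y) := by
  simp only [dot3_eq_dotProduct, cross3_eq_crossProduct, cross_dot_cross, dotProduct_comm y x, sq]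

lemma crossProduct_smul_sub_smul {R : Type*} [CommRing R] (c a b : R) (x y z : Fin 3 → R) :
    (c • x - a • z) ⨯₃ (c • y - b • z) =
      c • (c • x ⨯₃ y - a • z ⨯₃ y - b • x ⨯₃ z) := by
  simp only [map_sub, map_smul, LinearMap.sub_apply, LinearMap.smul_apply, cross_self, smul_zero]
  module

end CrossProduct

section InvSMul

variable {𝕜 E F : Type*} [NontriviallyNormedField 𝕜] [NormedAddCommGroup E] [NormedSpace 𝕜 E]
  [NormedAddCommGroup F] [NormedSpace 𝕜 F]

lemma fderiv_inv_smul_apply {h : E → 𝕜} {X : E → F} {p : E} (hh : DifferentiableAt 𝕜 h p)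
    (hX : DifferentiableAt 𝕜 X p) (hp : h p ≠ 0) (w : E) :
    fderiv 𝕜 (fun q => (h q)⁻¹ • X q) p w =
      (h p ^ 2)⁻¹ • (h p • fderiv 𝕜 X p w - fderiv 𝕜 h p w • X p) := by
  have hinv : HasFDerivAt (fun q => (h q)⁻¹) (-(h p ^ 2)⁻¹ • fderiv 𝕜 h p) p :=
    (hasDerivAt_inv hp).comp_hasFDerivAt p hh.hasFDerivAt
  have hscale : (h p)⁻¹ = (h p ^ 2)⁻¹ * h p := by field_simp
  rw [fderiv_fun_smul hinv.differentiableAt hX, hinv.fderiv]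
  simp only [_root_.add_apply, _root_.smul_apply, ContinuousLinearMap.smulRight_apply,
    smul_eq_mul, hscale]
  module

lemma crossProduct_fderiv_inv_smul {h : E → 𝕜} {X : E → Fin 3 → 𝕜} {p : E}
    (hh : DifferentiableAt 𝕜 h p) (hX : DifferentiableAt 𝕜 X p) (hp : h p ≠ 0) (w z : E) :
    fderiv 𝕜 (fun q => (h q)⁻¹ • X q) p w ⨯₃ fderiv 𝕜 (fun q => (h q)⁻¹ • X q) p z =
      (h p ^ 3)⁻¹ • (h p • fderiv 𝕜 X p w ⨯₃ fderiv 𝕜 X p z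
        - fderiv 𝕜 h p w • X p ⨯₃ fderiv 𝕜 X p z
        - fderiv 𝕜 h p z • fderiv 𝕜 X p w ⨯₃ X p) := by
  have hscale : (h p ^ 2)⁻¹ * ((h p ^ 2)⁻¹ * h p) = (h p ^ 3)⁻¹ := by field_simp
  simp only [fderiv_inv_smul_apply hh hX hp, map_smul, LinearMap.smul_apply,
    crossProduct_smul_sub_smul, smul_smul, hscale]

end InvSMul

/-- The embedding of the parameter plane as the affine plane at height one in `ℝ³`, of which
the critical end chart is a rescaling. -/
def homogeneousLift (p : ℝ × ℝ) : Fin 3 → ℝ := ![p.1, p.2, 1]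

lemma hasFDerivAt_homogeneousLift (p : ℝ × ℝ) :
    HasFDerivAt homogeneousLift
      (ContinuousLinearMap.pi ![ContinuousLinearMap.fst ℝ ℝ ℝ, ContinuousLinearMap.snd ℝ ℝ ℝ, 0])
      p := by
  rw [hasFDerivAt_pi']
  intro i
  fin_cases i
  exacts [hasFDerivAt_fst, hasFDerivAt_snd, hasFDerivAt_const 1 p]

lemma fderiv_homogeneousLift_apply (p w : ℝ × ℝ) :
    fderiv ℝ homogeneousLift p w = ![w.1, w.2, 0] := by
  rw [(hasFDerivAt_homogeneousLift p).fderiv]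
  ext i
  fin_cases i <;> rfl

/-- The critical end chart `(u, v) ↦ (u / h, v / h, 1 / h)` of a surface near a critical end
point, as a function on all of `ℝ × ℝ`; it is meaningful only where `h` does not vanish. -/
def criticalEndChart (h : ℝ × ℝ → ℝ) (p : ℝ × ℝ) : Fin 3 → ℝ :=
  ![p.1 / h p, p.2 / h p, 1 / h p]

lemma criticalEndChart_eq_inv_smul (h : ℝ × ℝ → ℝ) :
    criticalEndChart h = fun p => (h p)⁻¹ • homogeneousLift p := by
  funext p
  simp only [criticalEndChart, homogeneousLift, smul_vec3, smul_eq_mul, div_eq_inv_mul]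

lemma cross3_vdu_vdv_criticalEndChart {h : ℝ × ℝ → ℝ} {p : ℝ × ℝ}
    (hh : DifferentiableAt ℝ h p) (hp : h p ≠ 0) :
    cross3 (vdu (criticalEndChart h) p) (vdv (criticalEndChart h) p) =
      ![pdu h p / h p ^ 3, pdv h p / h p ^ 3,
        (h p - p.1 * pdu h p - p.2 * pdv h p) / h p ^ 3] := by
  rw [vdu, vdv, criticalEndChart_eq_inv_smul, cross3_eq_crossProduct,
    crossProduct_fderiv_inv_smul hh (hasFDerivAt_homogeneousLift p).differentiableAt hp]
  simp only [fderiv_homogeneousLift_apply, ← pdu.eq_def, ← pdv.eq_def]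
  simp only [cross_apply, homogeneousLift, cons_val, smul_vec3, cons_sub_cons, empty_sub_empty,
    smul_eq_mul]
  apply vec3_eq <;> ring

theorem stmt_15_general {h : ℝ × ℝ → ℝ} {p : ℝ × ℝ} (hh : DifferentiableAt ℝ h p) (hp : h p ≠ 0)
    {β : ℝ × ℝ → Fin 3 → ℝ} (hβ : β =ᶠ[𝓝 p] criticalEndChart h) :
    cross3 (vdu β p) (vdv β p) =
      ![pdu h p / h p ^ 3, pdv h p / h p ^ 3,
        (h p - p.1 * pdu h p - p.2 * pdv h p) / h p ^ 3] ∧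
    dot3 (vdu β p) (vdu β p) * dot3 (vdv β p) (vdv β p) - (dot3 (vdu β p) (vdv β p)) ^ 2 =
      dot3 (cross3 (vdu β p) (vdv β p)) (cross3 (vdu β p) (vdv β p)) ∧
    dot3 (cross3 (vdu β p) (vdv β p)) (cross3 (vdu β p) (vdv β p)) =
      ((pdu h p) ^ 2 + (pdv h p) ^ 2
        + (h p - p.1 * pdu h p - p.2 * pdv h p) ^ 2) / h p ^ 6 ∧
    (¬(pdu h p = 0 ∧ pdv h p = 0 ∧ h p - p.1 * pdu h p - p.2 * pdv h p = 0) ↔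
      LinearIndependent ℝ ![vdu β p, vdv β p]) := by
  have hcross : cross3 (vdu β p) (vdv β p) =
      ![pdu h p / h p ^ 3, pdv h p / h p ^ 3,
        (h p - p.1 * pdu h p - p.2 * pdv h p) / h p ^ 3] := by
    simpa only [vdu, vdv, hβ.fderiv_eq] using cross3_vdu_vdv_criticalEndChart hh hp
  refine ⟨hcross, dot3_mul_dot3_sub_sq _ _, ?_, ?_⟩
  · rw [hcross, dot3_eq_dotProduct, vec3_dotProduct']
    ring
  · rw [← crossProduct_ne_zero_iff_linearIndependent, ← cross3_eq_crossProduct, hcross]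
    simp [hp]

/-- cross product of the partial derivatives of the critical end chart
`β(u,v) = (u/h, v/h, 1/h)`, the identity `EG − F² = |β_u × β_v|²`, and the immersion
property where `(h_u, h_v, h − u·h_u − v·h_v) ≠ 0`. -/
theorem stmt_15 (U : Set (ℝ × ℝ)) (hU : IsOpen U) (h : ℝ × ℝ → ℝ)
    (hh : ContDiffOn ℝ 1 h U) (hpos : ∀ p ∈ U, 0 < h p)
    (β : ℝ × ℝ → Fin 3 → ℝ)
    (hβ : ∀ p ∈ U, β p = ![p.1 / h p, p.2 / h p, 1 / h p]) :
    ∀ p ∈ U,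
      cross3 (vdu β p) (vdv β p) =
        ![pdu h p / h p ^ 3, pdv h p / h p ^ 3,
          (h p - p.1 * pdu h p - p.2 * pdv h p) / h p ^ 3] ∧
      dot3 (vdu β p) (vdu β p) * dot3 (vdv β p) (vdv β p)
          - (dot3 (vdu β p) (vdv β p)) ^ 2 =
        dot3 (cross3 (vdu β p) (vdv β p)) (cross3 (vdu β p) (vdv β p)) ∧
      dot3 (cross3 (vdu β p) (vdv β p)) (cross3 (vdu β p) (vdv β p)) =
        ((pdu h p) ^ 2 + (pdv h p) ^ 2
          + (h p - p.1 * pdu h p - p.2 * pdv h p) ^ 2) / h p ^ 6 ∧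
      (¬(pdu h p = 0 ∧ pdv h p = 0 ∧ h p - p.1 * pdu h p - p.2 * pdv h p = 0) →
        LinearIndependent ℝ ![vdu β p, vdv β p]) := fun p hp =>
  have ⟨hcross, hgram, hnorm, himm⟩ := stmt_15_general
    ((hh.differentiableOn one_ne_zero).differentiableAt (hU.mem_nhds hp)) (hpos p hp).ne'
    (eventuallyEq_of_mem (hU.mem_nhds hp) hβ)
  ⟨hcross, hgram, hnorm, himm.mp⟩
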